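/- Let τ : ℝ³ → ℝ be a continuous compactly supported function such that ∫ τ · ∂ⱼ∂ₖΨ dx = 0 for all smooth compactly supported Ψ : ℝ³ → ℝ, where j ≠ k are two fixed distinct coordinate indices. Then τ = 0. -/

import Mathlib

open MeasureTheory

noncomputable def pd (i : Fin 3) (f : (Fin 3 → ℝ) → ℝ) : (Fin 3 → ℝ) → ℝ :=
  fun x => fderiv ℝ f x (Pi.single i 1)

lemma pd_smooth (i : Fin 3) (f : (Fin 3 → ℝ) → ℝ) (hf : ContDiff ℝ (⊤ : ℕ∞) f) :
    ContDiff ℝ (⊤ : ℕ∞) (pd i f) := by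
  unfold pd
  exact (hf.fderiv_right (m := (⊤ : ℕ∞)) (by simp)).clm_apply contDiff_const

lemma pd_supp (i : Fin 3) (f : (Fin 3 → ℝ) → ℝ) (hf : HasCompactSupport f) :
    HasCompactSupport (pd i f) :=
  (hf.fderiv (𝕜 := ℝ)).comp_left (g := fun L : (Fin 3 → ℝ) →L[ℝ] ℝ => L (Pi.single i 1)) (by simp)

lemma pd_translate (i : Fin 3) (f : (Fin 3 → ℝ) → ℝ) (a : Fin 3 → ℝ) :
    pd i (fun x => f (x + a)) = fun x => pd i f (x + a) := by
  funext x
  simp [pd, fderiv_comp_add_right]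

lemma key (τ : (Fin 3 → ℝ) → ℝ) (hcont : Continuous τ) (hsupp : HasCompactSupport τ) (i : Fin 3)
    (φ : (Fin 3 → ℝ) → ℝ) (hφ : ContDiff ℝ (⊤ : ℕ∞) φ) (hs : HasCompactSupport φ)
    (H : ∀ t : ℝ, ∫ x, τ x * pd i φ (x + t • Pi.single i 1) = 0) :
    ∫ x, τ x * φ x = 0 := by
  have hpc := (pd_smooth i φ hφ).continuous
  obtain ⟨C, hC⟩ := hpc.bounded_above_of_compact_support (pd_supp i φ hs)
  have hφc := hφ.continuous
  have hint : ∀ g : (Fin 3 → ℝ) → ℝ, Continuous g → Integrable (fun x => τ x * g x) := fun g hg =>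
    (hcont.mul hg).integrable_of_hasCompactSupport hsupp.mul_right
  have hder : ∀ t : ℝ, HasDerivAt (fun t : ℝ => ∫ x, τ x * φ (x + t • Pi.single i 1)) 0 t := by
    intro t
    have := (hasDerivAt_integral_of_dominated_loc_of_deriv_le (μ := volume) (𝕜 := ℝ)
      (F := fun (t : ℝ) x => τ x * φ (x + t • Pi.single i 1))
      (F' := fun (t : ℝ) x => τ x * pd i φ (x + t • Pi.single i 1))
      (x₀ := t) (s := Set.univ) (bound := fun x => ‖τ x‖ * C) Filter.univ_mem
      (Filter.Eventually.of_forall fun t => (hint _ (by fun_prop)).aestronglyMeasurable)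
      (hint _ (by fun_prop)) (hint _ (by fun_prop)).aestronglyMeasurable
      (Filter.Eventually.of_forall fun x t _ => by
        rw [norm_mul]; exact mul_le_mul_of_nonneg_left (hC _) (norm_nonneg _))
      ((hcont.integrable_of_hasCompactSupport hsupp).norm.mul_const C)
      (Filter.Eventually.of_forall fun x t _ => by
        apply HasDerivAt.const_mul
        have h1 : HasDerivAt (fun t : ℝ => x + t • (Pi.single i 1 : Fin 3 → ℝ))
            (Pi.single i 1) t := by
          simpa using ((hasDerivAt_id t).smul_const (Pi.single i 1 : Fin 3 → ℝ)).const_add x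
        exact ((hφ.differentiable (by simp)) _).hasFDerivAt.comp_hasDerivAt t h1)).2
    rwa [H t] at this
  obtain ⟨R, hR⟩ := hsupp.isCompact.isBounded.exists_norm_le
  obtain ⟨S, hS⟩ := hs.isCompact.isBounded.exists_norm_le
  have hc := is_const_of_deriv_eq_zero (fun t => (hder t).differentiableAt)
    (fun t => (hder t).deriv) 0 (|R| + |S| + 1)
  simp only [zero_smul, add_zero] at hc
  rw [hc]
  have : (fun x => τ x * φ (x + (|R| + |S| + 1) • Pi.single i 1)) = fun _ => 0 := by
    funext x
    by_contra hne
    have h1 := hR x (subset_tsupport _ (left_ne_zero_of_mul hne))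
    have h2 := hS _ (subset_tsupport _ (right_ne_zero_of_mul hne))
    have h3 := (norm_le_pi_norm x i).trans h1
    have h4 := (norm_le_pi_norm _ i).trans h2
    simp only [Pi.add_apply, Pi.smul_apply, Pi.single_eq_same, smul_eq_mul, mul_one,
      Real.norm_eq_abs] at h3 h4
    have := abs_le.1 h3
    have := abs_le.1 h4
    have := le_abs_self R
    have := le_abs_self S
    linarith
  rw [this]; simp

lemma trans_supp (f : (Fin 3 → ℝ) → ℝ) (hf : HasCompactSupport f) (a : Fin 3 → ℝ) :
    HasCompactSupport (fun x => f (x + a)) :=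
  hf.comp_homeomorph (Homeomorph.addRight a)

lemma trans_smooth (f : (Fin 3 → ℝ) → ℝ) (hf : ContDiff ℝ (⊤ : ℕ∞) f) (a : Fin 3 → ℝ) :
    ContDiff ℝ (⊤ : ℕ∞) (fun x => f (x + a)) :=
  hf.comp (contDiff_id.add contDiff_const)

theorem stmt7 (τ : (Fin 3 → ℝ) → ℝ) (j k : Fin 3) (hjk : j ≠ k)
    (hcont : Continuous τ) (hsupp : HasCompactSupport τ)
    (h : ∀ Ψ : (Fin 3 → ℝ) → ℝ, ContDiff ℝ (⊤ : ℕ∞) Ψ → HasCompactSupport Ψ →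
      ∫ x, τ x * pd j (pd k Ψ) x = 0) :
    ∀ x, τ x = 0 := by
  have h1 : ∀ Ψ : (Fin 3 → ℝ) → ℝ, ContDiff ℝ (⊤ : ℕ∞) Ψ → HasCompactSupport Ψ →
      ∫ x, τ x * pd k Ψ x = 0 := by
    intro Ψ hΨ hs
    refine key τ hcont hsupp j _ (pd_smooth k Ψ hΨ) (pd_supp k Ψ hs) fun t => ?_
    generalize (t • Pi.single j 1 : Fin 3 → ℝ) = a
    have := h (fun x => Ψ (x + a)) (trans_smooth Ψ hΨ a) (trans_supp Ψ hs a)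
    rw [pd_translate k Ψ, pd_translate j (pd k Ψ)] at this
    exact this
  have h2 : ∀ Ψ : (Fin 3 → ℝ) → ℝ, ContDiff ℝ (⊤ : ℕ∞) Ψ → HasCompactSupport Ψ →
      ∫ x, τ x * Ψ x = 0 := by
    intro Ψ hΨ hs
    refine key τ hcont hsupp k _ hΨ hs fun t => ?_
    generalize (t • Pi.single k 1 : Fin 3 → ℝ) = a
    have := h1 (fun x => Ψ (x + a)) (trans_smooth Ψ hΨ a) (trans_supp Ψ hs a)
    rw [pd_translate k Ψ] at this
    exact this
  have h3 : ∀ᵐ x, τ x = 0 :=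
    ae_eq_zero_of_integral_contDiff_smul_eq_zero hcont.locallyIntegrable fun g hg hgs => by
      simpa only [smul_eq_mul, mul_comm] using h2 g hg hgs
  have h4 : τ = fun _ => 0 := (hcont.ae_eq_iff_eq volume continuous_const).1 h3
  exact fun x => congrFun h4 x
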